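/- Fix K > 0. For all ω, λ ∈ ℝ and every n ∈ ℤ, the convolution identity ∑_{m∈ℤ} ρ_K[λ−ω](m) · ρ_K[λ](m+n) = exp(−(K/2)(n−ω)²) · Z_{2K}(λ − (ω+n)/2) / (Z_K(λ−ω) · Z_K(λ)) holds; i.e., the pmf μ_K[ω,λ](n) equals exp(−(K/2)(n−ω)²) · Q_K(n,ω,λ) where Q_K(n,ω,λ) = Z_{2K}(λ − (ω+n)/2)/(Z_K(λ−ω)Z_K(λ)). -/

import Mathlib

/-!
Each summand of the convolution is a product of two Gaussians in `m`. Completing the square in `m`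
splits the exponent into a part `-(K/2)(n - ω)²` free of `m` and a single Gaussian of parameter
`2K` centred at `λ - (ω + n)/2`. Pulling the constant factor out of the sum leaves `Z_{2K}`.
-/

/-- Normalization constant with general parameter: `Z_κ(λ) = ∑_{m∈ℤ} exp(−κ(m−λ)²)`. -/
noncomputable def Zfun (κ lam : ℝ) : ℝ :=
  ∑' m : ℤ, Real.exp (-κ * ((m : ℝ) - lam) ^ 2)

/-- Discrete Gaussian pmf `ρ_K[λ](n) = exp(−K(n−λ)²)/Z_K(λ)`. -/
noncomputable def rho (K lam : ℝ) (n : ℤ) : ℝ :=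
  Real.exp (-K * ((n : ℝ) - lam) ^ 2) / Zfun K lam

/-- `μ_K[ω,λ](n) = ∑_{m∈ℤ} ρ_K[λ−ω](m) ρ_K[λ](m+n)`. -/
noncomputable def muK (K ω lam : ℝ) (n : ℤ) : ℝ :=
  ∑' m : ℤ, rho K (lam - ω) m * rho K lam (m + n)

theorem stmt10 (K : ℝ) (hK : 0 < K) (ω lam : ℝ) (n : ℤ) :
    muK K ω lam n =
      Real.exp (-(K / 2) * ((n : ℝ) - ω) ^ 2) *
        (Zfun (2 * K) (lam - (ω + (n : ℝ)) / 2) / (Zfun K (lam - ω) * Zfun K lam)) := by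
  -- Completing the square: `a² + b² = 2((a + b)/2)² + (b - a)²/2` with
  -- `a = m - (lam - ω)` and `b = m + n - lam`; only the first square depends on `m`.
  have hterm : ∀ m : ℤ, rho K (lam - ω) m * rho K lam (m + n) =
      (Real.exp (-(K / 2) * ((n : ℝ) - ω) ^ 2) / (Zfun K (lam - ω) * Zfun K lam)) *
        Real.exp (-(2 * K) * ((m : ℝ) - (lam - (ω + (n : ℝ)) / 2)) ^ 2) := by
    intro m
    unfold rho
    rw [div_mul_div_comm, div_mul_eq_mul_div, ← Real.exp_add, ← Real.exp_add]
    congr 2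
    push_cast
    ring
  -- In `ℝ`, `tsum_mul_left` needs no summability.
  have hsum : muK K ω lam n =
      (Real.exp (-(K / 2) * ((n : ℝ) - ω) ^ 2) / (Zfun K (lam - ω) * Zfun K lam)) *
        Zfun (2 * K) (lam - (ω + (n : ℝ)) / 2) := by
    rw [muK, tsum_congr hterm, tsum_mul_left]
    rfl
  rw [hsum]
  ring
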